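/- Let ψ : Ω → ℝ be an eigenvector of H with eigenvalue E, set E' := E + K, and assume Σ_{α∈Ω} ψ(α)² ≤ 1. Assume the classically allowed region Ū := {α ∈ Ω : 1/u(α) − E' < 0} is nonempty, fix ε ∈ (0,1), let S be the Agmon action defined from ε, u, E' as in the context, and set ū := max_{β∈Ū} u(β). Then for every α ∈ Ω with 1/u(α) − E' > 0, |ψ(α)| ≤ √( (E'·ū·u(α) − u(α)) / (ū − E'·ū·u(α)) ) · e^{−S(α)}/√ε. (Theorem IV.2: eigenstates decay exponentially in the Agmon action throughout the classically forbidden region of the inverse landscape.) -/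

import Mathlib

open Matrix Finset

/-!
Agmon's method with the inverse landscape as effective potential. A positive supersolution
`(H + K) u ≥ 1` gives the uncertainty principle `∑ f² / u ≤ ⟨f, (H + K) f⟩`. For `f = g ψ` with
`ψ` an eigenvector, the IMS localization formula turns the right side into
`E' ∑ (g ψ)² + (t / 2) ∑ₐ ∑_{b ∼ a} (g a - g b)² ψ a ψ b`. The Agmon edge lengths are chosen so
that for `g = exp S` the last sum is at most `(1 - ε) ∑ (1/u - E')⁺ (g ψ)²`. Hence
`ε ∑ (1/u - E')⁺ (g ψ)² ≤ ∑ (1/u - E')⁻ (g ψ)²`, and since `g = 1` on the allowed region and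
`(1/u - E')⁻ ≤ E' - 1/ū`, the right side is at most `E' - 1/ū`. Keeping a single term on the left
gives the pointwise bound.
-/

section SumNeighborFinset

variable {Ω : Type*} [Fintype Ω] (G : SimpleGraph Ω) [DecidableRel G.Adj]

lemma sum_neighborFinset_comm {M : Type*} [AddCommMonoid M] (F : Ω → Ω → M) :
    ∑ a, ∑ b ∈ G.neighborFinset a, F a b = ∑ a, ∑ b ∈ G.neighborFinset a, F b a :=
  sum_comm' fun a b => by simp [G.adj_comm]

lemma sum_neighborFinset_le_of_add_swap_le {R : Type*} [AddCommMonoid R] [LinearOrder R]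
    [IsOrderedCancelAddMonoid R] {F Q : Ω → Ω → R}
    (h : ∀ a b, G.Adj a b → F a b + F b a ≤ Q a b + Q b a) :
    ∑ a, ∑ b ∈ G.neighborFinset a, F a b ≤ ∑ a, ∑ b ∈ G.neighborFinset a, Q a b := by
  have two_nsmul_sum (F : Ω → Ω → R) : 2 • ∑ a, ∑ b ∈ G.neighborFinset a, F a b =
      ∑ a, ∑ b ∈ G.neighborFinset a, (F a b + F b a) := by
    simp only [sum_add_distrib, two_nsmul, ← sum_neighborFinset_comm G F]
  refine le_of_nsmul_le_nsmul_right two_ne_zero ?_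
  rw [two_nsmul_sum, two_nsmul_sum]
  exact sum_le_sum fun a _ => sum_le_sum fun b hb => h a b ((G.mem_neighborFinset a b).1 hb)

end SumNeighborFinset

lemma mul_add_mul_le_sq_mul_div_add {x y p q : ℝ} (hp : 0 < p) (hq : 0 < q) :
    x * y + y * x ≤ x ^ 2 * (q / p) + y ^ 2 * (p / q) := by
  have : x ^ 2 * (q / p) + y ^ 2 * (p / q) - (x * y + y * x)
      = (x * q - y * p) ^ 2 / (p * q) := by
    field_simp
    ring
  have : 0 ≤ (x * q - y * p) ^ 2 / (p * q) := by positivity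
  linarith

/-- The tight-binding Hamiltonian on `G` with hopping amplitude `t` and on-site potential `V`. A
spectral shift `H + K` is again of this form, with potential `V + K`, so `K` is absorbed into `V`
in the estimates. -/
def hoppingHamiltonian {Ω : Type*} [DecidableEq Ω] (G : SimpleGraph Ω) [DecidableRel G.Adj]
    (t : ℝ) (V : Ω → ℝ) : Matrix Ω Ω ℝ :=
  diagonal V - t • G.adjMatrix ℝ

section Hamiltonian

variable {Ω : Type*} [DecidableEq Ω] {G : SimpleGraph Ω} [DecidableRel G.Adj]
  {t E : ℝ} {V u ψ : Ω → ℝ}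

lemma add_smul_one_eq_hoppingHamiltonian {H : Matrix Ω Ω ℝ}
    (hH : ∀ a b, H a b = if a = b then V a else if G.Adj a b then -t else 0) (K : ℝ) :
    H + K • (1 : Matrix Ω Ω ℝ) = hoppingHamiltonian G t fun a => V a + K := by
  ext a b
  rcases eq_or_ne a b with rfl | hab
  · simp [hH, hoppingHamiltonian]
  · by_cases hadj : G.Adj a b <;> simp [hH, hoppingHamiltonian, hab, hadj]

variable [Fintype Ω]

lemma hoppingHamiltonian_mulVec_apply (f : Ω → ℝ) (a : Ω) :
    (hoppingHamiltonian G t V *ᵥ f) a = V a * f a - t * ∑ b ∈ G.neighborFinset a, f b := by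
  simp [hoppingHamiltonian, sub_mulVec, smul_mulVec, mulVec_diagonal,
    SimpleGraph.adjMatrix_mulVec_apply]

lemma dotProduct_hoppingHamiltonian_mulVec (f h : Ω → ℝ) :
    f ⬝ᵥ hoppingHamiltonian G t V *ᵥ h =
      ∑ a, V a * (f a * h a) - t * ∑ a, ∑ b ∈ G.neighborFinset a, f a * h b := by
  simp only [dotProduct, hoppingHamiltonian_mulVec_apply, mul_sub, sum_sub_distrib, mul_sum]
  simp only [mul_left_comm]

-- The landscape uncertainty principle: `u` being a supersolution bounds `V` below by
-- `(1 + t ∑ u b) / u a`, and the hopping terms this leaves are absorbed by AM-GM on each edge.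
theorem sum_sq_div_le_dotProduct_hoppingHamiltonian (ht : 0 ≤ t) (hu : ∀ a, 0 < u a)
    (hHu : ∀ a, 1 ≤ (hoppingHamiltonian G t V *ᵥ u) a) (f : Ω → ℝ) :
    ∑ a, f a ^ 2 / u a ≤ f ⬝ᵥ hoppingHamiltonian G t V *ᵥ f := by
  have potential_le (a : Ω) :
      f a ^ 2 / u a + t * ∑ b ∈ G.neighborFinset a, f a ^ 2 * (u b / u a) ≤
        V a * (f a * f a) := by
    have hsup := hHu a
    rw [hoppingHamiltonian_mulVec_apply] at hsup
    rw [← mul_sum, ← sum_div]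
    calc f a ^ 2 / u a + t * (f a ^ 2 * ((∑ b ∈ G.neighborFinset a, u b) / u a))
        = f a ^ 2 / u a * (1 + t * ∑ b ∈ G.neighborFinset a, u b) := by ring
      _ ≤ f a ^ 2 / u a * (V a * u a) := by
        gcongr
        · exact div_nonneg (sq_nonneg _) (hu a).le
        · linarith
      _ = V a * (f a * f a) := by field_simp [(hu a).ne']
  have hopping_le : ∑ a, ∑ b ∈ G.neighborFinset a, f a * f b ≤
      ∑ a, ∑ b ∈ G.neighborFinset a, f a ^ 2 * (u b / u a) :=
    sum_neighborFinset_le_of_add_swap_le G fun a b _ =>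
      mul_add_mul_le_sq_mul_div_add (hu a) (hu b)
  have sum_potential_le := sum_le_sum fun a (_ : a ∈ univ) => potential_le a
  rw [sum_add_distrib, ← mul_sum] at sum_potential_le
  rw [dotProduct_hoppingHamiltonian_mulVec]
  linarith [mul_le_mul_of_nonneg_left hopping_le ht]

-- The discrete IMS localization formula.
theorem mul_dotProduct_hoppingHamiltonian_mulVec_mul (g f : Ω → ℝ) :
    (g * f) ⬝ᵥ hoppingHamiltonian G t V *ᵥ (g * f) =
      (g ^ 2 * f) ⬝ᵥ hoppingHamiltonian G t V *ᵥ f +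
        t / 2 * ∑ a, ∑ b ∈ G.neighborFinset a, (g a - g b) ^ 2 * (f a * f b) := by
  have expand : ∑ a, ∑ b ∈ G.neighborFinset a, (g a - g b) ^ 2 * (f a * f b) =
      2 * ∑ a, ∑ b ∈ G.neighborFinset a, g a ^ 2 * f a * f b -
        2 * ∑ a, ∑ b ∈ G.neighborFinset a, g a * f a * (g b * f b) := by
    have swap := sum_neighborFinset_comm G fun a b => g a ^ 2 * f a * f b
    rw [two_mul (∑ a, ∑ b ∈ G.neighborFinset a, g a ^ 2 * f a * f b)]
    nth_rw 2 [swap]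
    simp only [mul_sum, ← sum_add_distrib, ← sum_sub_distrib]
    congr! 2
    ring
  have potential_eq : ∑ a, V a * (g a * f a * (g a * f a)) =
      ∑ a, V a * (g a ^ 2 * f a * f a) := by
    congr! 1
    ring
  simp only [dotProduct_hoppingHamiltonian_mulVec, Pi.mul_apply, Pi.pow_apply, expand,
    potential_eq]
  ring

theorem sum_one_div_sub_mul_sq_le_sum_sq_sub (ht : 0 ≤ t) (hu : ∀ a, 0 < u a)
    (hHu : ∀ a, 1 ≤ (hoppingHamiltonian G t V *ᵥ u) a)
    (hψ : hoppingHamiltonian G t V *ᵥ ψ = E • ψ) (g : Ω → ℝ) :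
    ∑ a, (1 / u a - E) * (g a * ψ a) ^ 2 ≤
      t / 2 * ∑ a, ∑ b ∈ G.neighborFinset a, (g a - g b) ^ 2 * ψ a ^ 2 := by
  have landscape_le := sum_sq_div_le_dotProduct_hoppingHamiltonian ht hu hHu (g * ψ)
  have eigen_eq : (g ^ 2 * ψ) ⬝ᵥ hoppingHamiltonian G t V *ᵥ ψ = ∑ a, E * (g a * ψ a) ^ 2 := by
    rw [hψ]
    simp only [dotProduct, Pi.mul_apply, Pi.pow_apply, Pi.smul_apply, smul_eq_mul]
    congr! 1
    ring
  have cross_le : ∑ a, ∑ b ∈ G.neighborFinset a, (g a - g b) ^ 2 * (ψ a * ψ b) ≤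
      ∑ a, ∑ b ∈ G.neighborFinset a, (g a - g b) ^ 2 * ψ a ^ 2 :=
    sum_neighborFinset_le_of_add_swap_le G fun a b _ => by
      nlinarith [mul_nonneg (sq_nonneg (g a - g b)) (sq_nonneg (ψ a - ψ b))]
  rw [mul_dotProduct_hoppingHamiltonian_mulVec_mul, eigen_eq] at landscape_le
  calc ∑ a, (1 / u a - E) * (g a * ψ a) ^ 2
      = ∑ a, (g * ψ) a ^ 2 / u a - ∑ a, E * (g a * ψ a) ^ 2 := by
        rw [← sum_sub_distrib]
        congr! 1
        simp only [Pi.mul_apply]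
        ring
    _ ≤ t / 2 * ∑ a, ∑ b ∈ G.neighborFinset a, (g a - g b) ^ 2 * (ψ a * ψ b) := by linarith
    _ ≤ _ := by gcongr

end Hamiltonian

/-- The distance in `G` from the set `s` to the vertex `a` for the edge lengths `w`. Being a real
infimum, it takes the junk value `0` when `a` is not reachable from `s`. -/
noncomputable def weightedDist {Ω : Type*} (G : SimpleGraph Ω) (w : Ω → Ω → ℝ) (s : Set Ω)
    (a : Ω) : ℝ :=
  sInf {c | ∃ x ∈ s, ∃ p : G.Walk x a, c = (p.darts.map fun d => w d.toProd.1 d.toProd.2).sum}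

section WeightedDist

variable {Ω : Type*} {G : SimpleGraph Ω} {w : Ω → Ω → ℝ} {s : Set Ω} {a b x : Ω}

lemma sum_map_darts_nonneg (hw : ∀ a b, G.Adj a b → 0 ≤ w a b) (p : G.Walk x a) :
    0 ≤ (p.darts.map fun d => w d.toProd.1 d.toProd.2).sum :=
  List.sum_nonneg <| List.forall_mem_map.2 fun d _ => hw _ _ d.adj

lemma weightedDist_le_sum_darts (hw : ∀ a b, G.Adj a b → 0 ≤ w a b) (hx : x ∈ s) (p : G.Walk x a) :
    weightedDist G w s a ≤ (p.darts.map fun d => w d.toProd.1 d.toProd.2).sum :=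
  csInf_le ⟨0, by rintro _ ⟨_, _, q, rfl⟩; exact sum_map_darts_nonneg hw q⟩ ⟨x, hx, p, rfl⟩

lemma weightedDist_eq_zero_of_mem (hw : ∀ a b, G.Adj a b → 0 ≤ w a b) (ha : a ∈ s) :
    weightedDist G w s a = 0 := by
  refine le_antisymm (by simpa using weightedDist_le_sum_darts hw ha .nil) (Real.sInf_nonneg ?_)
  rintro _ ⟨_, _, p, rfl⟩
  exact sum_map_darts_nonneg hw p

lemma weightedDist_le_weightedDist_add (hw : ∀ a b, G.Adj a b → 0 ≤ w a b)
    (hs : ∃ x ∈ s, G.Reachable x a) (hab : G.Adj a b) :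
    weightedDist G w s b ≤ weightedDist G w s a + w a b := by
  obtain ⟨x, hx, ⟨p⟩⟩ := hs
  rw [← sub_le_iff_le_add]
  refine le_csInf ⟨_, x, hx, p, rfl⟩ ?_
  rintro _ ⟨y, hy, q, rfl⟩
  simpa [SimpleGraph.Walk.darts_concat] using weightedDist_le_sum_darts hw hy (q.concat hab)

lemma abs_weightedDist_sub_weightedDist_le (hw : ∀ a b, G.Adj a b → 0 ≤ w a b)
    (hsymm : ∀ a b, G.Adj a b → w a b = w b a)
    (hs : ∀ a, ∃ x ∈ s, G.Reachable x a) (hab : G.Adj a b) :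
    |weightedDist G w s a - weightedDist G w s b| ≤ w a b := by
  have ha := weightedDist_le_weightedDist_add hw (hs b) hab.symm
  have hb := weightedDist_le_weightedDist_add hw (hs a) hab
  rw [hsymm b a hab.symm] at ha
  exact abs_sub_le_iff.2 ⟨by linarith, by linarith⟩

end WeightedDist

lemma sq_exp_sub_exp_le {x y z : ℝ} (hz : 0 ≤ z) (h : |x - y| ≤ Real.log (1 + √z)) :
    (Real.exp x - Real.exp y) ^ 2 ≤ z * Real.exp x ^ 2 := by
  have exp_le_of_sub_le {x y : ℝ} (h : x - y ≤ Real.log (1 + √z)) :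
      Real.exp x ≤ (1 + √z) * Real.exp y := by
    have hz' : 0 < 1 + √z := by positivity
    rw [← Real.exp_log hz', ← Real.exp_add]
    exact Real.exp_le_exp.2 (by linarith)
  obtain ⟨hxy, hyx⟩ := abs_sub_le_iff.1 h
  have abs_sub_le : |Real.exp x - Real.exp y| ≤ √z * Real.exp x := by
    have hx := exp_le_of_sub_le hxy
    have hy := exp_le_of_sub_le hyx
    rcases le_total (Real.exp y) (Real.exp x) with hle | hle
    · have := mul_le_mul_of_nonneg_left hle (Real.sqrt_nonneg z)
      exact abs_sub_le_iff.2 ⟨by linarith, by linarith⟩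
    · have := mul_nonneg (Real.sqrt_nonneg z) (Real.exp_pos x).le
      exact abs_sub_le_iff.2 ⟨by linarith, by linarith⟩
  calc (Real.exp x - Real.exp y) ^ 2 ≤ (√z * Real.exp x) ^ 2 :=
        sq_le_sq' (abs_le.1 abs_sub_le).1 (abs_le.1 abs_sub_le).2
    _ = z * Real.exp x ^ 2 := by rw [mul_pow, Real.sq_sqrt hz]

lemma abs_le_sqrt_mul_exp_neg_div_sqrt {ε p m s x : ℝ} (hε : 0 < ε) (hp : 0 < p)
    (h : ε * (p * (Real.exp s * x) ^ 2) ≤ m) :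
    |x| ≤ √(m / p) * (Real.exp (-s) / √ε) := by
  have hsq : (Real.exp s * x) ^ 2 ≤ m / p / ε := by
    rw [le_div_iff₀ hε, le_div_iff₀ hp]
    linarith
  calc |x| = Real.exp (-s) * |Real.exp s * x| := by
        rw [abs_mul, Real.abs_exp, ← mul_assoc, ← Real.exp_add, neg_add_cancel, Real.exp_zero,
          one_mul]
    _ ≤ Real.exp (-s) * √(m / p / ε) := by gcongr; exact Real.abs_le_sqrt hsq
    _ = √(m / p) * (Real.exp (-s) / √ε) := by rw [Real.sqrt_div' _ hε.le]; ring

lemma sub_div_sub_eq_sub_one_div_div {E p q : ℝ} (hp : p ≠ 0) (hq : q ≠ 0) :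
    (E * p * q - q) / (p - E * p * q) = (E - 1 / p) / (1 / q - E) := by
  rw [← mul_div_mul_left (E - 1 / p) (1 / q - E) (mul_ne_zero hp hq)]
  congr 1 <;> field_simp

lemma sum_mul_sq_le_of_sum_sq_le_one {ι : Type*} [Fintype ι] {c f : ι → ℝ} {M : ℝ} (hM : 0 ≤ M)
    (hc : ∀ i, c i ≤ M) (hf : ∑ i, f i ^ 2 ≤ 1) : ∑ i, c i * f i ^ 2 ≤ M :=
  calc ∑ i, c i * f i ^ 2 ≤ ∑ i, M * f i ^ 2 :=
        sum_le_sum fun i _ => mul_le_mul_of_nonneg_right (hc i) (sq_nonneg _)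
    _ = M * ∑ i, f i ^ 2 := (mul_sum _ _ _).symm
    _ ≤ M := mul_le_of_le_one_right hM hf

section Agmon

variable {Ω : Type*} [Fintype Ω] (G : SimpleGraph Ω) [DecidableRel G.Adj] (t ε : ℝ)
  (v : Ω → ℝ)

/-- The bound on `(g a - g b) ^ 2 / g a ^ 2` across the edges at `a` that the Agmon argument can
afford for a weight function `g`, given an energy barrier `v` (for the landscape, `1 / u - E`).
At an isolated vertex the division by zero makes it `0`. -/
noncomputable def agmonRate (a : Ω) : ℝ := 2 * (1 - ε) / (t * G.degree a) * (v a)⁺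

/-- The Agmon length of an edge: the largest change of `log g` across it that respects the bound
`agmonRate` at both endpoints. -/
noncomputable def agmonWeight (a b : Ω) : ℝ :=
  min (Real.log (1 + √(agmonRate G t ε v a))) (Real.log (1 + √(agmonRate G t ε v b)))

/-- The Agmon action: the distance from the classically allowed region `{a | v a < 0}` in the
Agmon edge lengths. -/
noncomputable def agmonAction : Ω → ℝ := weightedDist G (agmonWeight G t ε v) {a | v a < 0}

variable {G t ε v}

lemma agmonRate_nonneg (ht : 0 ≤ t) (hε : ε ≤ 1) (a : Ω) : 0 ≤ agmonRate G t ε v a := by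
  have : 0 ≤ 1 - ε := sub_nonneg.2 hε
  have := posPart_nonneg (v a)
  unfold agmonRate
  positivity

lemma half_mul_degree_mul_agmonRate_le (ht : 0 < t) (hε : ε ≤ 1) (a : Ω) :
    t / 2 * (G.degree a * agmonRate G t ε v a) ≤ (1 - ε) * (v a)⁺ := by
  unfold agmonRate
  rcases eq_or_ne (G.degree a : ℝ) 0 with hdeg | hdeg
  · simpa [hdeg] using mul_nonneg (sub_nonneg.2 hε) (posPart_nonneg (v a))
  · exact le_of_eq (by field_simp)

lemma agmonWeight_nonneg (a b : Ω) : 0 ≤ agmonWeight G t ε v a b :=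
  le_min (Real.log_nonneg (by simp)) (Real.log_nonneg (by simp))

lemma agmonAction_eq_zero {a : Ω} (ha : v a < 0) : agmonAction G t ε v a = 0 :=
  weightedDist_eq_zero_of_mem (fun a b _ => agmonWeight_nonneg a b) ha

lemma sq_exp_agmonAction_sub_le (ht : 0 ≤ t) (hε : ε ≤ 1)
    (hreach : ∀ a, ∃ x, v x < 0 ∧ G.Reachable x a) {a b : Ω} (hab : G.Adj a b) :
    (Real.exp (agmonAction G t ε v a) - Real.exp (agmonAction G t ε v b)) ^ 2 ≤
      agmonRate G t ε v a * Real.exp (agmonAction G t ε v a) ^ 2 :=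
  sq_exp_sub_exp_le (agmonRate_nonneg ht hε a) <|
    (abs_weightedDist_sub_weightedDist_le (fun a b _ => agmonWeight_nonneg a b)
      (fun _ _ _ => min_comm _ _) hreach hab).trans (min_le_left _ _)

lemma half_mul_sum_sq_exp_agmonAction_sub_le (ht : 0 < t) (hε : ε ≤ 1)
    (hreach : ∀ a, ∃ x, v x < 0 ∧ G.Reachable x a) (f : Ω → ℝ) :
    t / 2 * ∑ a, ∑ b ∈ G.neighborFinset a,
        (Real.exp (agmonAction G t ε v a) - Real.exp (agmonAction G t ε v b)) ^ 2 * f a ^ 2 ≤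
      (1 - ε) * ∑ a, (v a)⁺ * (Real.exp (agmonAction G t ε v a) * f a) ^ 2 := by
  set g : Ω → ℝ := fun a => Real.exp (agmonAction G t ε v a)
  have sum_neighbors_le (a : Ω) : ∑ b ∈ G.neighborFinset a, (g a - g b) ^ 2 * f a ^ 2 ≤
      G.degree a * agmonRate G t ε v a * (g a * f a) ^ 2 := by
    calc ∑ b ∈ G.neighborFinset a, (g a - g b) ^ 2 * f a ^ 2
        ≤ ∑ _b ∈ G.neighborFinset a, agmonRate G t ε v a * g a ^ 2 * f a ^ 2 :=
          sum_le_sum fun b hb => mul_le_mul_of_nonneg_right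
            (sq_exp_agmonAction_sub_le ht.le hε hreach ((G.mem_neighborFinset a b).1 hb))
            (sq_nonneg _)
      _ = G.degree a * agmonRate G t ε v a * (g a * f a) ^ 2 := by
          rw [sum_const, G.card_neighborFinset_eq_degree, nsmul_eq_mul]
          ring
  rw [mul_sum, mul_sum]
  refine sum_le_sum fun a _ => ?_
  calc t / 2 * ∑ b ∈ G.neighborFinset a, (g a - g b) ^ 2 * f a ^ 2
      ≤ t / 2 * (G.degree a * agmonRate G t ε v a * (g a * f a) ^ 2) := by
        gcongr
        exact sum_neighbors_le a
    _ = t / 2 * (G.degree a * agmonRate G t ε v a) * (g a * f a) ^ 2 := by ring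
    _ ≤ (1 - ε) * (v a)⁺ * (g a * f a) ^ 2 :=
        mul_le_mul_of_nonneg_right (half_mul_degree_mul_agmonRate_le ht hε a) (sq_nonneg _)
    _ = (1 - ε) * ((v a)⁺ * (g a * f a) ^ 2) := mul_assoc _ _ _

lemma negPart_mul_sq_exp_agmonAction_mul (a : Ω) (x : ℝ) :
    (v a)⁻ * (Real.exp (agmonAction G t ε v a) * x) ^ 2 = (v a)⁻ * x ^ 2 := by
  rcases lt_or_ge (v a) 0 with ha | ha
  · rw [agmonAction_eq_zero ha, Real.exp_zero, one_mul]
  · rw [negPart_of_nonneg ha, zero_mul, zero_mul]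

variable [DecidableEq Ω] {V u ψ : Ω → ℝ} {E : ℝ}

theorem mul_sum_posPart_mul_sq_exp_agmonAction_le (ht : 0 < t) (hε : ε ≤ 1)
    (hu : ∀ a, 0 < u a) (hHu : ∀ a, 1 ≤ (hoppingHamiltonian G t V *ᵥ u) a)
    (hψ : hoppingHamiltonian G t V *ᵥ ψ = E • ψ) (hv : ∀ a, v a = 1 / u a - E)
    (hreach : ∀ a, ∃ x, v x < 0 ∧ G.Reachable x a) :
    ε * ∑ a, (v a)⁺ * (Real.exp (agmonAction G t ε v a) * ψ a) ^ 2 ≤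
      ∑ a, (v a)⁻ * ψ a ^ 2 := by
  have energy_le := (sum_one_div_sub_mul_sq_le_sum_sq_sub ht.le hu hHu hψ
    fun a => Real.exp (agmonAction G t ε v a)).trans
      (half_mul_sum_sq_exp_agmonAction_sub_le ht hε hreach ψ)
  have split : ∑ a, (1 / u a - E) * (Real.exp (agmonAction G t ε v a) * ψ a) ^ 2 =
      ∑ a, (v a)⁺ * (Real.exp (agmonAction G t ε v a) * ψ a) ^ 2 - ∑ a, (v a)⁻ * ψ a ^ 2 := by
    rw [← sum_sub_distrib]
    refine sum_congr rfl fun a _ => ?_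
    have negPart_eq :=
      negPart_mul_sq_exp_agmonAction_mul (G := G) (t := t) (ε := ε) (v := v) a (ψ a)
    rw [← negPart_eq, ← sub_mul, posPart_sub_negPart, hv]
  rw [split] at energy_le
  linarith

theorem abs_le_sqrt_mul_exp_neg_agmonAction (ht : 0 < t) (hε0 : 0 < ε) (hε1 : ε ≤ 1)
    (hu : ∀ a, 0 < u a) (hHu : ∀ a, 1 ≤ (hoppingHamiltonian G t V *ᵥ u) a)
    (hψ : hoppingHamiltonian G t V *ᵥ ψ = E • ψ) (hnorm : ∑ a, ψ a ^ 2 ≤ 1)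
    (hv : ∀ a, v a = 1 / u a - E) (hreach : ∀ a, ∃ x, v x < 0 ∧ G.Reachable x a)
    {M : ℝ} (hM : ∀ a, v a < 0 → u a ≤ M) {a : Ω} (ha : 0 < v a) :
    |ψ a| ≤ √((E * M * u a - u a) / (M - E * M * u a)) *
      (Real.exp (-agmonAction G t ε v a) / √ε) := by
  have neg_le {x : Ω} (hx : v x < 0) : -v x ≤ E - 1 / M := by
    rw [hv x]
    linarith [one_div_le_one_div_of_le (hu x) (hM x hx)]
  obtain ⟨x, hx, -⟩ := hreach a
  have depth_nonneg : 0 ≤ E - 1 / M := by linarith [neg_le hx]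
  have negPart_le (b : Ω) : (v b)⁻ ≤ E - 1 / M := by
    rcases lt_or_ge (v b) 0 with hb | hb
    · exact (negPart_of_nonpos hb.le).trans_le (neg_le hb)
    · exact (negPart_of_nonneg hb).trans_le depth_nonneg
  have single_le : v a * (Real.exp (agmonAction G t ε v a) * ψ a) ^ 2 ≤
      ∑ b, (v b)⁺ * (Real.exp (agmonAction G t ε v b) * ψ b) ^ 2 := by
    nth_rw 1 [← posPart_of_nonneg ha.le]
    exact single_le_sum (f := fun b => (v b)⁺ * (Real.exp (agmonAction G t ε v b) * ψ b) ^ 2)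
      (fun b _ => mul_nonneg (posPart_nonneg _) (sq_nonneg _)) (mem_univ a)
  rw [sub_div_sub_eq_sub_one_div_div ((hu x).trans_le (hM x hx)).ne' (hu a).ne', ← hv]
  refine abs_le_sqrt_mul_exp_neg_div_sqrt hε0 ha ?_
  calc ε * (v a * (Real.exp (agmonAction G t ε v a) * ψ a) ^ 2)
      ≤ ε * ∑ b, (v b)⁺ * (Real.exp (agmonAction G t ε v b) * ψ b) ^ 2 := by gcongr
    _ ≤ ∑ b, (v b)⁻ * ψ b ^ 2 :=
        mul_sum_posPart_mul_sq_exp_agmonAction_le ht hε1 hu hHu hψ hv hreach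
    _ ≤ E - 1 / M := sum_mul_sq_le_of_sum_sq_le_one depth_nonneg negPart_le hnorm

end Agmon

lemma mulVec_eq_of_eq_nonsing_inv_mulVec {n R : Type*} [Fintype n] [DecidableEq n] [CommRing R]
    {A : Matrix n n R} {x b : n → R} (hx : x = A⁻¹ *ᵥ b) (hx0 : x ≠ 0) : A *ᵥ x = b := by
  have hdet : IsUnit A.det := by
    by_contra hdet
    exact hx0 (by rw [hx, nonsing_inv_apply_not_isUnit _ hdet, zero_mulVec])
  rw [hx, mulVec_mulVec, mul_nonsing_inv _ hdet, one_mulVec]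

theorem mbll_agmon_decay_estimate_general
    {Ω : Type*} [Fintype Ω] [DecidableEq Ω] (G : SimpleGraph Ω) [DecidableRel G.Adj]
    (t : ℝ) (ht : 0 < t) (V : Ω → ℝ) (K : ℝ)
    (H : Matrix Ω Ω ℝ)
    (hH : ∀ α β, H α β = if α = β then V α else if G.Adj α β then -t else 0)
    (u : Ω → ℝ) (hupos : ∀ α, 0 < u α) (hu : ∀ α, 1 ≤ ((H + K • (1 : Matrix Ω Ω ℝ)) *ᵥ u) α)
    (ψ : Ω → ℝ) (E : ℝ) (hψ : H *ᵥ ψ = E • ψ)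
    (hnorm : ∑ α, ψ α ^ 2 ≤ 1)
    (E' : ℝ) (hE' : E' = E + K)
    (Ubar : Finset Ω) (hUbar : ∀ α, α ∈ Ubar ↔ 1 / u α - E' < 0)
    (hreach : ∀ α, ∃ x ∈ Ubar, G.Reachable x α)
    (ε : ℝ) (hε0 : 0 < ε) (hε1 : ε ≤ 1)
    (w : Ω → Ω → ℝ)
    (hw : ∀ α β, w α β =
      min (Real.log (1 + √(2 * (1 - ε) / (t * G.degree α) * max (1 / u α - E') 0)))
          (Real.log (1 + √(2 * (1 - ε) / (t * G.degree β) * max (1 / u β - E') 0))))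
    (S : Ω → ℝ)
    (hS : ∀ α, S α = sInf {s : ℝ | ∃ x ∈ Ubar, ∃ p : G.Walk x α,
      s = (p.darts.map fun d => w d.toProd.1 d.toProd.2).sum})
    (ubar : ℝ) (hubar : ∀ β ∈ Ubar, u β ≤ ubar) (α : Ω) (hα : 0 < 1 / u α - E') :
    |ψ α| ≤ √((E' * ubar * u α - u α) / (ubar - E' * ubar * u α)) *
      (Real.exp (-S α) / √ε) := by
  set v : Ω → ℝ := fun a => 1 / u a - E'
  have hHK : H + K • (1 : Matrix Ω Ω ℝ) = hoppingHamiltonian G t fun a => V a + K :=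
    add_smul_one_eq_hoppingHamiltonian hH K
  have hψ' : (hoppingHamiltonian G t fun a => V a + K) *ᵥ ψ = E' • ψ := by
    rw [← hHK, add_mulVec, hψ, smul_mulVec, one_mulVec, ← add_smul, hE']
  have hw' : w = agmonWeight G t ε v := funext₂ hw
  have hS' : S α = agmonAction G t ε v α := by
    simp only [hS, hUbar, hw', agmonAction, weightedDist, Set.mem_ofPred_eq, v]
  rw [hS']
  exact abs_le_sqrt_mul_exp_neg_agmonAction ht hε0 hε1 hupos (fun a => hHK ▸ hu a) hψ' hnorm
    (fun _ => rfl) (fun a => by simpa only [hUbar] using hreach a)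
    (fun a ha => hubar a ((hUbar a).2 ha)) hα

/-- **Theorem IV.2**: eigenstates decay exponentially in the Agmon action throughout the
classically forbidden region of the inverse landscape: for `α` with `1/u α − E' > 0`,
`|ψ α| ≤ √((E'·ū·u α − u α)/(ū − E'·ū·u α)) · e^{−S α}/√ε`, where `ū = max_{β ∈ Ū} u β`. -/
theorem mbll_agmon_decay_estimate
    {Ω : Type*} [Fintype Ω] [DecidableEq Ω] [Nonempty Ω]
    (G : SimpleGraph Ω) [DecidableRel G.Adj] (hG : G.Connected)
    (t : ℝ) (ht : 0 < t) (V : Ω → ℝ) (K : ℝ)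
    (H : Matrix Ω Ω ℝ)
    (hH : ∀ α β, H α β = if α = β then V α else if G.Adj α β then -t else 0)
    (hK : ∀ α, 0 ≤ K + V α - t * (G.degree α + 1))
    (u : Ω → ℝ) (hu : u = (H + K • (1 : Matrix Ω Ω ℝ))⁻¹ *ᵥ (fun _ => 1))
    (hupos : ∀ α, 0 < u α)
    (ψ : Ω → ℝ) (E : ℝ) (hψ : H *ᵥ ψ = E • ψ)
    (hnorm : ∑ α, ψ α ^ 2 ≤ 1)
    (E' : ℝ) (hE' : E' = E + K)
    (Ubar : Finset Ω) (hUbar : ∀ α, α ∈ Ubar ↔ 1 / u α - E' < 0) (hUne : Ubar.Nonempty)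
    (ε : ℝ) (hε0 : 0 < ε) (hε1 : ε < 1)
    (w : Ω → Ω → ℝ)
    (hw : ∀ α β, w α β =
      min (Real.log (1 + Real.sqrt (2 * (1 - ε) / (t * G.degree α) * max (1 / u α - E') 0)))
          (Real.log (1 + Real.sqrt (2 * (1 - ε) / (t * G.degree β) * max (1 / u β - E') 0))))
    (S : Ω → ℝ)
    (hS : ∀ α, S α = sInf {s : ℝ | ∃ x ∈ Ubar, ∃ p : G.Walk x α,
      s = (p.darts.map fun d => w d.toProd.1 d.toProd.2).sum})
    (ubar : ℝ) (hubar : ubar = Ubar.sup' hUne u) :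
    ∀ α, 0 < 1 / u α - E' →
      |ψ α| ≤ Real.sqrt ((E' * ubar * u α - u α) / (ubar - E' * ubar * u α))
        * (Real.exp (-S α) / Real.sqrt ε) := by
  have hu0 : u ≠ 0 := fun h => (hupos (Classical.arbitrary Ω)).ne' (congrFun h _)
  exact mbll_agmon_decay_estimate_general G t ht V K H hH u hupos
    (fun α => (congrFun (mulVec_eq_of_eq_nonsing_inv_mulVec hu hu0) α).ge) ψ E hψ hnorm E' hE'
    Ubar hUbar (fun α => hUne.imp fun x hx => ⟨hx, hG.preconnected x α⟩) ε hε0 hε1.le w hw S hS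
    ubar (fun _ hβ => hubar ▸ le_sup' u hβ)
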